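/- Let (A,D) be a regular MASA inclusion of C*-algebras and let B be a norm-closed (not necessarily self-adjoint) subalgebra of A with D ⊆ B ⊆ A. Then every approximate unit for D is an approximate unit for B, i.e., u_λ b → b and b u_λ → b for every b ∈ B. -/

import Mathlib

/-!
Write `p` for the (formal) limit of the approximate unit `u` of `D`. The C*-identity gives
`‖u i * x - x‖² ≤ 2 ‖u i * (x * star x) - x * star x‖`, so `u i * x → x` as soon as
`x * star x ∈ D` (`tendsto_mul_of_mul_star_mem`).

For a normalizer `n` and `d ∈ D` this applies to `x = n * d` and to `x = star n * d`; in other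
words `p` acts as a left unit on `n D` and on `star n D`. Hence, for `h ∈ D`,
`n * star n * h = lim n * u i * star n * h` and `h * n * star n = lim h * n * u i * star n`.
The elements `n * u i * star n` lie in the abelian algebra `D`, so the two limits coincide and
`n * star n` commutes with `D`. As `D` is a MASA, `n * star n ∈ D`
(`mul_star_mem_of_isNormalizer`), and the first paragraph gives `u i * n → n`.
The elements `a` with `u i * a → a` form a closed subspace because `‖u i‖ ≤ 1`, so by regularity
every `a` in `A` is such an element; right multiplication follows by taking adjoints.
-/

open scoped ComplexOrder
open Filter Topology

namespace CartanPaper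

variable {A : Type*} [NonUnitalCStarAlgebra A]

/-- A state on a C*-algebra: a positive linear functional of norm one. -/
def IsState (ρ : A →L[ℂ] ℂ) : Prop :=
  ‖ρ‖ = 1 ∧ ∀ a : A, 0 ≤ ρ (star a * a)

/-- `n` is a normalizer for the inclusion `(A, D)`:  `n D n* ∪ n* D n ⊆ D`. -/
def IsNormalizer (D : NonUnitalStarSubalgebra ℂ A) (n : A) : Prop :=
  ∀ d ∈ D, n * d * star n ∈ D ∧ star n * d * n ∈ D

/-- The inclusion `(A, D)` is regular: the linear span of the normalizers is norm-dense in `A`. -/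
def IsRegularInclusion (D : NonUnitalStarSubalgebra ℂ A) : Prop :=
  Dense (↑(Submodule.span ℂ {n : A | IsNormalizer D n}) : Set A)

/-- `D` is a maximal abelian *-subalgebra (MASA) of `A`:  the set of elements of `A` commuting
with `D` is exactly `D`.  (This encodes simultaneously that `D` is abelian and that it is
maximal among abelian *-subalgebras.) -/
def IsMasa (D : NonUnitalStarSubalgebra ℂ A) : Prop :=
  {a : A | ∀ d ∈ D, a * d = d * a} = (D : Set A)

end CartanPaper

open CartanPaper

section Helpers

variable {A : Type*} [NonUnitalCStarAlgebra A] {ι : Type*} {l : Filter ι} {u : ι → A}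

theorem tendsto_mul_of_mul_star_mem {D : NonUnitalStarSubalgebra ℂ A}
    (hsa : ∀ i, star (u i) = u i) (hu : ∀ i, ‖u i‖ ≤ 1)
    (hD : ∀ d ∈ D, Tendsto (fun i => u i * d) l (𝓝 d)) {x : A} (hx : x * star x ∈ D) :
    Tendsto (fun i => u i * x) l (𝓝 x) := by
  have h0 : Tendsto (fun i => ‖u i * (x * star x) - x * star x‖) l (𝓝 0) :=
    tendsto_iff_norm_sub_tendsto_zero.1 (hD _ hx)
  have hsq : ∀ i, ‖u i * x - x‖ * ‖u i * x - x‖ ≤ 2 * ‖u i * (x * star x) - x * star x‖ := by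
    intro i
    rw [← CStarRing.norm_self_mul_star]
    have e : (u i * x - x) * star (u i * x - x)
        = (u i * (x * star x) - x * star x) * u i - (u i * (x * star x) - x * star x) := by
      simp only [star_sub, star_mul, hsa i]
      noncomm_ring
    rw [e]
    set y := u i * (x * star x) - x * star x
    calc ‖y * u i - y‖ ≤ ‖y * u i‖ + ‖y‖ := norm_sub_le _ _
      _ ≤ ‖y‖ * ‖u i‖ + ‖y‖ := by gcongr; exact norm_mul_le _ _
      _ ≤ ‖y‖ * 1 + ‖y‖ := by gcongr; exact hu i
      _ = 2 * ‖y‖ := by ring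
  rw [tendsto_iff_norm_sub_tendsto_zero]
  have hs : Tendsto (fun i => √(2 * ‖u i * (x * star x) - x * star x‖)) l (𝓝 0) := by
    simpa using (h0.const_mul 2).sqrt
  exact squeeze_zero (fun _ => norm_nonneg _)
    (fun i => Real.le_sqrt_of_sq_le (by rw [sq]; exact hsq i)) hs

theorem isNormalizer_star {D : NonUnitalStarSubalgebra ℂ A} {n : A} (hn : IsNormalizer D n) :
    IsNormalizer D (star n) := fun d hd => by
  rw [star_star]
  exact (hn d hd).symm

theorem tendsto_mul_normalizer_mul {D : NonUnitalStarSubalgebra ℂ A}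
    (hsa : ∀ i, star (u i) = u i) (hu : ∀ i, ‖u i‖ ≤ 1)
    (hD : ∀ d ∈ D, Tendsto (fun i => u i * d) l (𝓝 d)) {n d : A} (hn : IsNormalizer D n)
    (hd : d ∈ D) : Tendsto (fun i => u i * (n * d)) l (𝓝 (n * d)) := by
  refine tendsto_mul_of_mul_star_mem hsa hu hD ?_
  have e : n * d * star (n * d) = n * (d * star d) * star n := by
    simp only [star_mul, mul_assoc]
  rw [e]
  exact (hn _ (mul_mem hd (star_mem hd))).1

/-- For a MASA `D`, the elements `n * star n` with `n` a normalizer lie in `D`, although `D` is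
not assumed to contain a unit, or an approximate unit, of `A`. -/
theorem mul_star_mem_of_isNormalizer [l.NeBot] {D : NonUnitalStarSubalgebra ℂ A}
    (hmasa : IsMasa D) (hmem : ∀ i, u i ∈ D)
    (hsa : ∀ i, star (u i) = u i) (hu : ∀ i, ‖u i‖ ≤ 1)
    (hD : ∀ d ∈ D, Tendsto (fun i => u i * d) l (𝓝 d)) {n : A} (hn : IsNormalizer D n) :
    n * star n ∈ D := by
  have habel : ∀ a ∈ D, ∀ d ∈ D, a * d = d * a := fun a ha => by
    have ha' : a ∈ (D : Set A) := ha
    rwa [← hmasa] at ha'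
  suffices h : n * star n ∈ (D : Set A) from h
  rw [← hmasa]
  intro h hh
  have hn' := isNormalizer_star hn
  have h1 : Tendsto (fun i => n * u i * star n * h) l (𝓝 (n * star n * h)) := by
    simpa only [mul_assoc] using (tendsto_mul_normalizer_mul hsa hu hD hn' hh).const_mul n
  have h2 : Tendsto (fun i => h * (n * u i * star n)) l (𝓝 (h * (n * star n))) := by
    -- the adjoint of `u i * (star n * star h) → star n * star h`, multiplied by `star n`
    simpa only [star_mul, star_star, hsa, mul_assoc] using
      ((tendsto_mul_normalizer_mul hsa hu hD hn' (star_mem hh)).star).mul_const (star n)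
  refine tendsto_nhds_unique h1 (h2.congr fun i => ?_)
  exact habel _ hh _ (hn _ (hmem i)).1

theorem isClosed_setOf_tendsto_mul (hu : ∀ i, ‖u i‖ ≤ 1) :
    IsClosed {a : A | Tendsto (fun i => u i * a) l (𝓝 a)} := by
  refine isClosed_of_closure_subset fun a ha => ?_
  refine Metric.tendsto_nhds.2 fun ε hε => ?_
  obtain ⟨b, hb, hab⟩ := Metric.mem_closure_iff.1 ha (ε / 3) (by positivity)
  filter_upwards [Metric.tendsto_nhds.1 hb (ε / 3) (by positivity)] with i hi
  have h1 : dist (u i * a) (u i * b) ≤ dist a b := by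
    rw [dist_eq_norm, dist_eq_norm, ← mul_sub]
    calc ‖u i * (a - b)‖ ≤ ‖u i‖ * ‖a - b‖ := norm_mul_le _ _
      _ ≤ 1 * ‖a - b‖ := by gcongr; exact hu i
      _ = ‖a - b‖ := one_mul _
  have h2 := dist_triangle4 (u i * a) (u i * b) b a
  rw [dist_comm b a] at h2
  linarith

end Helpers

/-- Let `(A, D)` be a regular MASA inclusion of C*-algebras and let `B` be a
norm-closed (not necessarily self-adjoint) subalgebra of `A` with `D ⊆ B ⊆ A`.  Then every
approximate unit for `D` is an approximate unit for `B`: `u i * b → b` and `b * u i → b` for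
every `b ∈ B`. -/
theorem stmt_11 {A : Type*} [NonUnitalCStarAlgebra A]
    (D : NonUnitalStarSubalgebra ℂ A) (hDclosed : IsClosed (D : Set A))
    (hmasa : IsMasa D) (hreg : IsRegularInclusion D)
    (B : Set A) (hBclosed : IsClosed B) (hDB : (D : Set A) ⊆ B)
    (hBadd : ∀ x ∈ B, ∀ y ∈ B, x + y ∈ B)
    (hBsmul : ∀ c : ℂ, ∀ x ∈ B, c • x ∈ B)
    (hBmul : ∀ x ∈ B, ∀ y ∈ B, x * y ∈ B)
    {ι : Type*} [Preorder ι] [IsDirected ι (· ≤ ·)] [Nonempty ι] (u : ι → A)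
    (humem : ∀ i, u i ∈ D)
    (hupos : ∀ i, ∃ v ∈ D, u i = star v * v)
    (hunorm : ∀ i, ‖u i‖ ≤ 1)
    (happroxD : ∀ d ∈ D, Tendsto (fun i => u i * d) atTop (𝓝 d) ∧
      Tendsto (fun i => d * u i) atTop (𝓝 d)) :
    ∀ b ∈ B, Tendsto (fun i => u i * b) atTop (𝓝 b) ∧
      Tendsto (fun i => b * u i) atTop (𝓝 b) := by
  have hsa : ∀ i, star (u i) = u i := fun i => by
    obtain ⟨v, -, hv⟩ := hupos i
    rw [hv, star_mul, star_star]
  have hD : ∀ d ∈ D, Tendsto (fun i => u i * d) atTop (𝓝 d) := fun d hd => (happroxD d hd).1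
  have hall : ∀ a : A, Tendsto (fun i => u i * a) atTop (𝓝 a) := by
    intro a
    refine (isClosed_setOf_tendsto_mul hunorm).closure_subset_iff.2 ?_ (hreg a)
    intro x hx
    refine Submodule.span_induction (p := fun y _ => Tendsto (fun i => u i * y) atTop (𝓝 y))
      ?_ ?_ ?_ ?_ hx
    · intro n hn
      exact tendsto_mul_of_mul_star_mem hsa hunorm hD
        (mul_star_mem_of_isNormalizer hmasa humem hsa hunorm hD hn)
    · simp
    · intro y z _ _ hy hz
      simpa only [mul_add] using hy.add hz
    · intro c y _ hy
      simpa only [mul_smul_comm] using hy.const_smul c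
  intro b _
  refine ⟨hall b, ?_⟩
  simpa only [star_mul, star_star, hsa] using (hall (star b)).star
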